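/- Let b > 0 and q ∈ (−1/b, b] satisfy f(q,b) = q³b − q²b² − q² + 2qb⁵ + qb + 3b⁴ = 1, and let P = P_{q,b} be the pentagon given by the convex hull of (−1/b, 0), (q, ±r), (b, ±c), with r = √(1+q²), c = (1+bq)/√(1+q²). Then both G_P = 0 and G_{P°} = 0; consequently (0,0) is a critical point of the function F_P(x,ξ) = vp((P°+ξ)° + x). -/

import Mathlib

open MeasureTheory

noncomputable section

/-- The polar body `K° = {y | ⟨x, y⟩ ≤ 1 for all x ∈ K}` in the plane. -/
def polarBody (K : Set (Fin 2 → ℝ)) : Set (Fin 2 → ℝ) :=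
  {y | ∀ x ∈ K, x 0 * y 0 + x 1 * y 1 ≤ 1}

/-- The volume product `vp(K) = |K| · |K°|`. -/
def vp (K : Set (Fin 2 → ℝ)) : ℝ :=
  (volume K).toReal * (volume (polarBody K)).toReal

/-- The barycenter `G_A = |A|⁻¹ ∫_A x dx`. -/
def bary (A : Set (Fin 2 → ℝ)) : Fin 2 → ℝ :=
  (volume A).toReal⁻¹ • ∫ x in A, x

/-- The covariance matrix `cov(K)_{ij} = |K|⁻¹ ∫_K x_i x_j dx`. -/
def covM (K : Set (Fin 2 → ℝ)) : Matrix (Fin 2) (Fin 2) ℝ :=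
  Matrix.of fun i j => (volume K).toReal⁻¹ * ∫ x in K, x i * x j

/-- The pentagon `P_{q,b}`: convex hull of `(-1/b, 0)`, `(q, ±r)`, `(b, ±c)`
where `r = √(1+q²)` and `c = (1+bq)/√(1+q²)`. -/
def pent (q b : ℝ) : Set (Fin 2 → ℝ) :=
  convexHull ℝ
    {![-1/b, 0], ![q, Real.sqrt (1 + q ^ 2)], ![q, -Real.sqrt (1 + q ^ 2)],
      ![b, (1 + b * q) / Real.sqrt (1 + q ^ 2)], ![b, -((1 + b * q) / Real.sqrt (1 + q ^ 2))]}

/-- The functional `F_K(x, ξ) = vp((K° + ξ)° + x)`. -/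
def FK (K : Set (Fin 2 → ℝ)) (p : (Fin 2 → ℝ) × (Fin 2 → ℝ)) : ℝ :=
  vp ((fun y => y + p.1) '' polarBody ((fun y => y + p.2) '' polarBody K))

open Set Filter Bornology Module
open scoped Topology

/-!
Translating a convex body by `ξ` changes its polar by the projective map `y ↦ y / (1 + ⟨ξ, y⟩)`,
whose Jacobian in the plane is `(1 + ⟨ξ, y⟩)⁻³`. Hence, for `(x, ξ)` near the origin,
`F_K(x, ξ) = ∫_K (1 + ⟨ξ, y⟩)⁻³ dy · ∫_{K°} (1 + ⟨x, y + ξ⟩)⁻³ dy`,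
and the first-order terms of the two factors are `-3 ⟨ξ, ∫_K y dy⟩` and `-3 ⟨x, ∫_{K°} y dy⟩`:
the origin is critical as soon as both barycenters vanish.

The pentagon satisfies `P° = -P`, so one barycenter suffices. Writing `P` as the region
`|y| ≤ h x` over `[-1/b, b]`, with `h` affine on either side of `q`, symmetry leaves the single
equation `∫ 2 x h x dx = 0`, and this integral is `(f(q, b) - 1) / (3 b² r)`.
-/

section ProjectiveMap

variable {E : Type*} [NormedAddCommGroup E] [NormedSpace ℝ E] {ℓ : E →L[ℝ] ℝ} {y : E}

/-- The projective map `y ↦ y / (1 + ℓ y)`. -/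
def projMap (ℓ : E →L[ℝ] ℝ) (y : E) : E := (1 + ℓ y)⁻¹ • y

lemma one_sub_apply_projMap (hy : 1 + ℓ y ≠ 0) : 1 - ℓ (projMap ℓ y) = (1 + ℓ y)⁻¹ := by
  simp only [projMap, map_smul, smul_eq_mul]
  field_simp
  ring

lemma projMap_neg_projMap (hy : 1 + ℓ y ≠ 0) : projMap (-ℓ) (projMap ℓ y) = y := by
  rw [projMap, neg_apply, ← sub_eq_add_neg, one_sub_apply_projMap hy, inv_inv,
    projMap, smul_inv_smul₀ hy]

lemma injOn_projMap : InjOn (projMap ℓ) {y | 1 + ℓ y ≠ 0} :=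
  LeftInvOn.injOn fun _ hy ↦ projMap_neg_projMap hy

lemma hasFDerivAt_projMap (hy : 1 + ℓ y ≠ 0) :
    HasFDerivAt (projMap ℓ)
      ((1 + ℓ y)⁻¹ • (ContinuousLinearMap.id ℝ E - ℓ.smulRight (projMap ℓ y))) y := by
  have hinv : HasFDerivAt (fun z ↦ (1 + ℓ z)⁻¹) (-((1 + ℓ y) ^ 2)⁻¹ • ℓ) y :=
    (hasDerivAt_inv hy).comp_hasFDerivAt y (ℓ.hasFDerivAt.const_add 1)
  refine (hinv.smul (hasFDerivAt_id y)).congr_fderiv (ContinuousLinearMap.ext fun v ↦ ?_)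
  simp [projMap, smul_smul, pow_two, sub_eq_add_neg, mul_left_comm, mul_comm]

lemma det_id_sub_smulRight [FiniteDimensional ℝ E] (ℓ : E →L[ℝ] ℝ) (v : E) :
    (ContinuousLinearMap.id ℝ E - ℓ.smulRight v).det = 1 - ℓ v := by
  have h : ((ContinuousLinearMap.id ℝ E - ℓ.smulRight v : E →L[ℝ] E) : E →ₗ[ℝ] E) =
      LinearMap.transvection (ℓ : E →ₗ[ℝ] ℝ) (-v) := by
    ext w
    simp [LinearMap.transvection, sub_eq_add_neg]
  rw [ContinuousLinearMap.det, h, LinearMap.transvection.det]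
  simp [sub_eq_add_neg]

lemma det_fderiv_projMap [FiniteDimensional ℝ E] (hy : 1 + ℓ y ≠ 0) :
    ((1 + ℓ y)⁻¹ • (ContinuousLinearMap.id ℝ E - ℓ.smulRight (projMap ℓ y))).det =
      ((1 + ℓ y) ^ (finrank ℝ E + 1))⁻¹ := by
  rw [ContinuousLinearMap.det, ContinuousLinearMap.toLinearMap_smul, LinearMap.det_smul,
    ← ContinuousLinearMap.det, det_id_sub_smulRight, one_sub_apply_projMap hy, inv_pow, ← mul_inv,
    ← pow_succ]

lemma measureReal_image_projMap [FiniteDimensional ℝ E] [MeasurableSpace E] [BorelSpace E]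
    (μ : Measure E) [μ.IsAddHaarMeasure] {A : Set E} (hA : MeasurableSet A)
    (hpos : ∀ y ∈ A, 0 < 1 + ℓ y) :
    μ.real (projMap ℓ '' A) = ∫ y in A, ((1 + ℓ y) ^ (finrank ℝ E + 1))⁻¹ ∂μ := by
  have hchange := integral_image_eq_integral_abs_det_fderiv_smul μ hA
    (fun y hy ↦ (hasFDerivAt_projMap (hpos y hy).ne').hasFDerivWithinAt)
    (injOn_projMap.mono fun y hy ↦ (hpos y hy).ne') (fun _ ↦ (1 : ℝ))
  rw [setIntegral_const, smul_eq_mul, mul_one] at hchange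
  rw [hchange]
  refine setIntegral_congr_fun hA fun y hy ↦ ?_
  have := hpos y hy
  simp only [smul_eq_mul, mul_one, det_fderiv_projMap this.ne']
  exact abs_of_pos (by positivity)

end ProjectiveMap

section ParametricIntegral

variable {E V : Type*} [NormedAddCommGroup E] [NormedSpace ℝ E] [NormedAddCommGroup V]
  [NormedSpace ℝ V] (B : E →L[ℝ] V →L[ℝ] ℝ) {A : Set V}

lemma eventually_forall_apply_add_mem [ProperSpace V] (hA : IsBounded A) {U : Set ℝ}
    (hU : U ∈ 𝓝 0) : ∀ᶠ p : E × V in 𝓝 0, ∀ y ∈ A, B p.1 (y + p.2) ∈ U := by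
  have hcont : Continuous fun z : (E × V) × V ↦ B z.1.1 (z.2 + z.1.2) := by fun_prop
  have hcpt : ∀ᶠ p : E × V in 𝓝 0, ∀ y ∈ closure A, B p.1 (y + p.2) ∈ U :=
    hA.isCompact_closure.eventually_forall_of_forall_eventually fun y _ ↦
      hcont.continuousAt.eventually_mem (by simpa using hU)
  exact hcpt.mono fun p hp y hy ↦ hp y (subset_closure hy)

lemma exists_eventually_abs_apply_add_le (hA : IsBounded A) :
    ∃ C, ∀ᶠ p : E × V in 𝓝 0, ∀ y ∈ A, |B p.1 (y + p.2)| ≤ C * ‖p‖ := by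
  obtain ⟨R, hAR⟩ := hA.exists_norm_le
  refine ⟨‖B‖ * (R + 1), ?_⟩
  filter_upwards [Metric.closedBall_mem_nhds 0 one_pos] with p hp y hy
  rw [mem_closedBall_zero_iff] at hp
  calc |B p.1 (y + p.2)| ≤ ‖B‖ * ‖p.1‖ * ‖y + p.2‖ := B.le_opNorm₂ _ _
    _ ≤ ‖B‖ * ‖p‖ * (R + 1) := by
        gcongr
        · exact norm_fst_le p
        · exact (norm_add_le _ _).trans (add_le_add (hAR y hy) ((norm_snd_le p).trans hp))
    _ = ‖B‖ * (R + 1) * ‖p‖ := by ring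

lemma hasFDerivAt_apply_add (y : V) :
    HasFDerivAt (fun p : E × V ↦ B p.1 (y + p.2))
      ((B.flip y).comp (ContinuousLinearMap.fst ℝ E V)) 0 := by
  refine (B.hasFDerivAt_of_bilinear hasFDerivAt_fst (hasFDerivAt_snd.const_add y)).congr_fderiv ?_
  ext <;> simp

lemma hasFDerivAt_setIntegral_comp_apply_add [ProperSpace V] [MeasurableSpace V] [BorelSpace V]
    {μ : Measure V} [IsFiniteMeasureOnCompacts μ] (hA : IsBounded A) (hAm : MeasurableSet A)
    (hcent : ∫ y in A, y ∂μ = 0) {φ : ℝ → ℝ} {φ' : ℝ} (hφ : HasDerivAt φ φ' 0)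
    (hφm : Measurable φ) :
    HasFDerivAt (fun p : E × V ↦ ∫ y in A, φ (B p.1 (y + p.2)) ∂μ) (0 : E × V →L[ℝ] ℝ) 0 := by
  obtain ⟨C, hB⟩ := exists_eventually_abs_apply_add_le B hA
  obtain ⟨D, hD, hφD⟩ := hφ.isBigO_sub.exists_nonneg
  have hlip : ∀ᶠ p : E × V in 𝓝 0, ∀ y ∈ A,
      ‖φ (B p.1 (y + p.2)) - φ (B (0 : E × V).1 (y + (0 : E × V).2))‖ ≤ D * C * ‖p - 0‖ := by
    filter_upwards [hB, eventually_forall_apply_add_mem B hA hφD.bound] with p hpC hpD y hy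
    calc ‖φ (B p.1 (y + p.2)) - φ (B (0 : E × V).1 (y + (0 : E × V).2))‖
        ≤ D * |B p.1 (y + p.2)| := by simpa using hpD y hy
      _ ≤ D * (C * ‖p‖) := by gcongr; exact hpC y hy
      _ = D * C * ‖p - 0‖ := by rw [sub_zero, mul_assoc]
  have hfin : IsFiniteMeasure (μ.restrict A) := ⟨by simpa using hA.measure_lt_top⟩
  have hφ₀ (y : V) : HasDerivAt φ φ' (B (0 : E × V).1 (y + (0 : E × V).2)) := by simpa using hφ
  -- The derivative `Λ y` of the integrand at `0` is linear in `y`, hence integrates to `Λ` of the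
  -- first moment.
  let Λ : V →L[ℝ] E × V →L[ℝ] ℝ := φ' •
    (((ContinuousLinearMap.compL ℝ (E × V) E ℝ).flip (ContinuousLinearMap.fst ℝ E V)).comp B.flip)
  obtain ⟨_, hderiv⟩ := hasFDerivAt_integral_of_dominated_loc_of_lip' (μ := μ.restrict A)
    (F := fun (p : E × V) y ↦ φ (B p.1 (y + p.2))) (F' := Λ) (bound := fun _ ↦ D * C) hlip
    (fun p _ ↦ (hφm.comp (by fun_prop)).aestronglyMeasurable) (by simp)
    Λ.continuous.aestronglyMeasurable
    (ae_restrict_of_forall_mem hAm fun y hy p hp ↦ hp y hy) (integrable_const _)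
    (.of_forall fun y ↦ (hφ₀ y).comp_hasFDerivAt 0 (hasFDerivAt_apply_add B y))
  have hid : IntegrableOn (fun y ↦ y) A μ := by
    obtain ⟨R, hR⟩ := hA.exists_norm_le
    exact .of_bound hA.measure_lt_top aestronglyMeasurable_id R (ae_restrict_of_forall_mem hAm hR)
  rwa [Λ.integral_comp_comm hid, hcent, map_zero] at hderiv

end ParametricIntegral

section Polar

/-- The standard inner product of the plane, as a continuous bilinear map. -/
def planeDot : (Fin 2 → ℝ) →L[ℝ] (Fin 2 → ℝ) →L[ℝ] ℝ :=
  (dotProductBilin ℝ ℝ).toContinuousBilinearMap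

lemma planeDot_apply (x y : Fin 2 → ℝ) : planeDot x y = x 0 * y 0 + x 1 * y 1 := by
  simp [planeDot, dotProduct, Fin.sum_univ_two]

lemma planeDot_comm (x y : Fin 2 → ℝ) : planeDot x y = planeDot y x := by
  simp only [planeDot_apply, mul_comm]

lemma exists_planeDot_eq (f : (Fin 2 → ℝ) →L[ℝ] ℝ) : ∃ v, planeDot v = f := by
  obtain ⟨v, hv⟩ := (dotProductEquiv ℝ (Fin 2)).surjective f
  exact ⟨v, ContinuousLinearMap.ext fun y ↦ LinearMap.congr_fun hv y⟩

variable {K L : Set (Fin 2 → ℝ)} {x y : Fin 2 → ℝ}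

lemma mem_polarBody : y ∈ polarBody K ↔ ∀ x ∈ K, planeDot x y ≤ 1 := by
  simp only [polarBody, mem_ofPred_eq, planeDot_apply]

lemma polarBody_eq_biInter (K : Set (Fin 2 → ℝ)) :
    polarBody K = ⋂ x ∈ K, {y | planeDot x y ≤ 1} := by
  ext y
  simp [mem_polarBody]

lemma isClosed_polarBody (K : Set (Fin 2 → ℝ)) : IsClosed (polarBody K) := by
  rw [polarBody_eq_biInter]
  exact isClosed_biInter fun x _ ↦ isClosed_le (planeDot x).continuous continuous_const

lemma convex_polarBody (K : Set (Fin 2 → ℝ)) : Convex ℝ (polarBody K) := by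
  rw [polarBody_eq_biInter]
  exact convex_iInter₂ fun x _ ↦ convex_halfSpace_le (planeDot x).isLinear 1

lemma subset_polarBody_comm : L ⊆ polarBody K ↔ K ⊆ polarBody L := by
  simp only [subset_def, mem_polarBody]
  exact ⟨fun h x hx y hy ↦ planeDot_comm x y ▸ h y hy x hx,
    fun h y hy x hx ↦ planeDot_comm x y ▸ h x hx y hy⟩

lemma polarBody_convexHull (S : Set (Fin 2 → ℝ)) :
    polarBody (convexHull ℝ S) = polarBody S := by
  refine Subset.antisymm (fun y hy x hx ↦ hy x (subset_convexHull ℝ S hx)) ?_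
  exact subset_polarBody_comm.1 <|
    convexHull_min (subset_polarBody_comm.1 Subset.rfl) (convex_polarBody _)

lemma polarBody_polarBody (hconv : Convex ℝ K) (hcl : IsClosed K) (h0 : 0 ∈ K) :
    polarBody (polarBody K) = K := by
  refine Subset.antisymm (fun x hx ↦ ?_) (subset_polarBody_comm.1 Subset.rfl)
  by_contra hxK
  obtain ⟨f, u, hfK, hfx⟩ := geometric_hahn_banach_closed_point hconv hcl hxK
  obtain ⟨v, rfl⟩ := exists_planeDot_eq f
  have hu : 0 < u := by simpa using hfK 0 h0
  have hv : u⁻¹ • v ∈ polarBody K := mem_polarBody.2 fun y hy ↦ by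
    rw [planeDot_comm, map_smul, smul_apply, smul_eq_mul, inv_mul_le_one₀ hu]
    exact (hfK y hy).le
  have hvx := mem_polarBody.1 hx _ hv
  rw [map_smul, smul_apply, smul_eq_mul, inv_mul_le_one₀ hu] at hvx
  exact hvx.not_gt hfx

lemma polarBody_mem_nhds_zero (hK : IsBounded K) : polarBody K ∈ 𝓝 0 := by
  have hsmall := (continuous_id.prodMk continuous_const).tendsto' (0 : Fin 2 → ℝ) (0, 0) rfl
    |>.eventually (eventually_forall_apply_add_mem planeDot hK (Iic_mem_nhds one_pos))
  filter_upwards [hsmall] with y hy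
  exact mem_polarBody.2 fun x hx ↦ by simpa [planeDot_comm] using hy x hx

lemma isBounded_polarBody (hK : K ∈ 𝓝 0) : IsBounded (polarBody K) := by
  obtain ⟨δ, hδ, hball⟩ := Metric.nhds_basis_closedBall.mem_iff.1 hK
  refine isBounded_iff_forall_norm_le.2 ⟨δ⁻¹, fun y hy ↦
    (pi_norm_le_iff_of_nonneg (by positivity)).2 fun i ↦ ?_⟩
  have hmem (s : ℝ) (hs : |s| ≤ δ) : s * y i ≤ 1 := by
    have := mem_polarBody.1 hy (Pi.single i s) (hball (by simpa [Pi.norm_single] using hs))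
    fin_cases i <;> simpa [planeDot_apply] using this
  rw [Real.norm_eq_abs, ← one_div, le_div_iff₀ hδ, ← abs_of_pos hδ, ← abs_mul, abs_le]
  constructor
  · linarith [hmem (-δ) (by simp [abs_of_pos hδ])]
  · linarith [hmem δ (abs_of_pos hδ).le]

lemma polarBody_image_add (hx : x ∈ K) (hpos : ∀ y ∈ polarBody K, 0 < 1 + planeDot x y) :
    polarBody ((fun y ↦ y + x) '' K) = projMap (planeDot x) '' polarBody K := by
  have hmem {z : Fin 2 → ℝ} : z ∈ polarBody ((fun y ↦ y + x) '' K) ↔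
      ∀ y ∈ K, planeDot y z ≤ 1 - planeDot x z := by
    rw [mem_polarBody, forall_mem_image]
    simp only [map_add, add_apply, le_sub_iff_add_le]
  refine Subset.antisymm (fun z hz ↦ ?_) ?_
  · have hzx : 0 < 1 - planeDot x z := by linarith [hmem.1 hz x hx]
    refine ⟨projMap (-planeDot x) z, mem_polarBody.2 fun y hy ↦ ?_, ?_⟩
    · simpa [projMap, ← sub_eq_add_neg, inv_mul_le_one₀ hzx] using hmem.1 hz y hy
    · have hzx' : 1 + (-planeDot x) z ≠ 0 := by simpa [← sub_eq_add_neg] using hzx.ne'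
      simpa using projMap_neg_projMap hzx'
  · rintro _ ⟨w, hw, rfl⟩
    refine hmem.2 fun y hy ↦ ?_
    rw [one_sub_apply_projMap (hpos w hw).ne', projMap, map_smul, smul_eq_mul]
    exact mul_le_of_le_one_right (inv_nonneg.2 (hpos w hw).le) (mem_polarBody.1 hw y hy)

lemma measureReal_polarBody_image_add (hx : x ∈ K)
    (hpos : ∀ y ∈ polarBody K, 0 < 1 + planeDot x y) :
    volume.real (polarBody ((fun y ↦ y + x) '' K)) =
      ∫ y in polarBody K, ((1 + planeDot x y) ^ 3)⁻¹ := by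
  rw [polarBody_image_add hx hpos,
    measureReal_image_projMap volume (isClosed_polarBody K).measurableSet hpos]
  simp

end Polar

section VolumeProduct

variable {K : Set (Fin 2 → ℝ)}

lemma FK_eq_integral_mul_integral (hconv : Convex ℝ K) (hcl : IsClosed K) (h0 : 0 ∈ K)
    {x ξ : Fin 2 → ℝ} (hξ : ∀ y ∈ K, |planeDot ξ y| < 1)
    (hx : ∀ y ∈ polarBody K, |planeDot x (y + ξ)| < 1) :
    FK K (x, ξ) = (∫ y in K, ((1 + planeDot ξ y) ^ 3)⁻¹) *
      ∫ y in polarBody K, ((1 + planeDot x (y + ξ)) ^ 3)⁻¹ := by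
  set L := polarBody K
  set Lξ := (fun y ↦ y + ξ) '' L
  have hLK : polarBody L = K := polarBody_polarBody hconv hcl h0
  have hξL : ξ ∈ L := mem_polarBody.2 fun y hy ↦ by
    rw [planeDot_comm]; exact (abs_lt.1 (hξ y hy)).2.le
  have hξL' : -ξ ∈ L := mem_polarBody.2 fun y hy ↦ by
    rw [planeDot_comm, map_neg, neg_apply]; linarith [(abs_lt.1 (hξ y hy)).1]
  have hLξ : polarBody (polarBody Lξ) = Lξ := by
    refine polarBody_polarBody ?_ ?_ ⟨-ξ, hξL', by simp⟩
    · simpa [Lξ, add_comm] using (convex_polarBody K).translate ξ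
    · exact (Homeomorph.addRight ξ).isClosedMap _ (isClosed_polarBody K)
  have hxM : x ∈ polarBody Lξ := mem_polarBody.2 <| forall_mem_image.2 fun y hy ↦ by
    rw [planeDot_comm]; exact (abs_lt.1 (hx y hy)).2.le
  have hvol : volume.real (polarBody Lξ) = ∫ y in K, ((1 + planeDot ξ y) ^ 3)⁻¹ := by
    rw [measureReal_polarBody_image_add hξL, hLK]
    rw [hLK]
    exact fun y hy ↦ by linarith [(abs_lt.1 (hξ y hy)).1]
  have hvol' : volume.real (polarBody ((fun y ↦ y + x) '' polarBody Lξ)) =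
      ∫ y in L, ((1 + planeDot x (y + ξ)) ^ 3)⁻¹ := by
    rw [measureReal_polarBody_image_add hxM, hLξ]
    · exact (measurePreserving_add_right volume ξ).setIntegral_image_emb
        (measurableEmbedding_addRight ξ) _ _
    · rw [hLξ]
      exact forall_mem_image.2 fun y hy ↦ by linarith [(abs_lt.1 (hx y hy)).1]
  rw [← hvol, ← hvol', FK, vp, image_add_right, measure_preimage_add_right]
  simp [Measure.real, Lξ, L]

lemma integral_eq_zero_of_bary_eq_zero (hK : IsBounded K) (h0 : K ∈ 𝓝 0) (hG : bary K = 0) :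
    ∫ y in K, y = 0 := by
  have hvol : (volume K).toReal ≠ 0 :=
    (ENNReal.toReal_pos (Measure.measure_pos_of_mem_nhds volume h0).ne' hK.measure_lt_top.ne).ne'
  exact (smul_eq_zero.1 hG).resolve_left (inv_ne_zero hvol)

lemma bary_neg (A : Set (Fin 2 → ℝ)) : bary (-A) = -bary A := by
  have h := (Measure.measurePreserving_neg (volume : Measure (Fin 2 → ℝ))).setIntegral_preimage_emb
    (MeasurableEquiv.neg (Fin 2 → ℝ)).measurableEmbedding (fun y ↦ -y) A
  rw [bary, bary, Measure.measure_neg, ← smul_neg, ← integral_neg, ← h]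
  simp

lemma hasDerivAt_inv_one_add_pow_three : HasDerivAt (fun s : ℝ ↦ ((1 + s) ^ 3)⁻¹) (-3) 0 := by
  have h : HasDerivAt (fun s : ℝ ↦ (1 + s) ^ 3) 3 0 := by
    simpa using ((hasDerivAt_id (0 : ℝ)).const_add 1).fun_pow 3
  simpa using h.fun_inv (by simp)

lemma hasFDerivAt_setIntegral_inv_one_add_pow_three {A : Set (Fin 2 → ℝ)} (hA : IsBounded A)
    (hAm : MeasurableSet A) (h0 : A ∈ 𝓝 0) (hG : bary A = 0) :
    HasFDerivAt (fun p : (Fin 2 → ℝ) × (Fin 2 → ℝ) ↦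
      ∫ y in A, ((1 + planeDot p.1 (y + p.2)) ^ 3)⁻¹) (0 : _ →L[ℝ] ℝ) 0 :=
  hasFDerivAt_setIntegral_comp_apply_add planeDot hA hAm
    (integral_eq_zero_of_bary_eq_zero hA h0 hG) hasDerivAt_inv_one_add_pow_three (by fun_prop)

theorem hasFDerivAt_FK_zero (hconv : Convex ℝ K) (hcpt : IsCompact K) (h0 : K ∈ 𝓝 0)
    (hG : bary K = 0) (hG' : bary (polarBody K) = 0) :
    HasFDerivAt (FK K) (0 : (Fin 2 → ℝ) × (Fin 2 → ℝ) →L[ℝ] ℝ) 0 := by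
  have hL : IsBounded (polarBody K) := isBounded_polarBody h0
  let toFst : (Fin 2 → ℝ) × (Fin 2 → ℝ) →L[ℝ] (Fin 2 → ℝ) × (Fin 2 → ℝ) :=
    (ContinuousLinearMap.snd ℝ _ _).prod 0
  have htoFst : Tendsto toFst (𝓝 0) (𝓝 0) := toFst.continuous.tendsto' 0 0 (map_zero _)
  have hunit : Ioo (-1 : ℝ) 1 ∈ 𝓝 0 := Ioo_mem_nhds (by simp) one_pos
  have hFK : FK K =ᶠ[𝓝 0] fun p ↦
      (∫ y in K, ((1 + planeDot (toFst p).1 (y + (toFst p).2)) ^ 3)⁻¹) *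
        ∫ y in polarBody K, ((1 + planeDot p.1 (y + p.2)) ^ 3)⁻¹ := by
    filter_upwards [htoFst.eventually
        (eventually_forall_apply_add_mem planeDot hcpt.isBounded hunit),
      eventually_forall_apply_add_mem planeDot hL hunit] with p hξ hx
    simp only [toFst, ContinuousLinearMap.prod_apply, ContinuousLinearMap.coe_snd', zero_apply,
      add_zero] at hξ ⊢
    exact FK_eq_integral_mul_integral hconv hcpt.isClosed (mem_of_mem_nhds h0)
      (fun y hy ↦ abs_lt.2 (hξ y hy)) (fun y hy ↦ abs_lt.2 (hx y hy))
  have hK' := hasFDerivAt_setIntegral_inv_one_add_pow_three hcpt.isBounded hcpt.measurableSet h0 hG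
  have hL' := hasFDerivAt_setIntegral_inv_one_add_pow_three hL
    (isClosed_polarBody K).measurableSet (polarBody_mem_nhds_zero hcpt.isBounded) hG'
  rw [← map_zero toFst] at hK'
  refine HasFDerivAt.congr_of_eventuallyEq ?_ hFK
  exact ((hK'.comp 0 toFst.hasFDerivAt).mul hL').congr_fderiv (by simp)

end VolumeProduct

section SymmRegion

/-- The plane region between the graphs of `-h` and `h` over the interval `[s, t]`. -/
def symmRegion (s t : ℝ) (h : ℝ → ℝ) : Set (Fin 2 → ℝ) :=
  {y | y 0 ∈ Icc s t ∧ |y 1| ≤ h (y 0)}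

variable {s t : ℝ} {h : ℝ → ℝ}

lemma mem_symmRegion {y : Fin 2 → ℝ} :
    y ∈ symmRegion s t h ↔ y 0 ∈ Icc s t ∧ y 1 ∈ Icc (-h (y 0)) (h (y 0)) := by
  rw [mem_Icc (a := -h (y 0)), ← abs_le]
  rfl

lemma setIntegral_symmRegion {F : Type*} [NormedAddCommGroup F] [NormedSpace ℝ F]
    {f : (Fin 2 → ℝ) → F} (hR : MeasurableSet (symmRegion s t h))
    (hf : IntegrableOn f (symmRegion s t h)) :
    ∫ y in symmRegion s t h, f y = ∫ x in Icc s t, ∫ y in Icc (-h x) (h x), f ![x, y] := by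
  have hmp := (volume_preserving_finTwoArrow ℝ).symm
  have hint := hmp.integrable_comp_of_integrable (hf.integrable_indicator hR)
  have hslice (x : ℝ) : ∫ y, (symmRegion s t h).indicator f ![x, y] =
      (Icc s t).indicator (fun x ↦ ∫ y in Icc (-h x) (h x), f ![x, y]) x := by
    by_cases hx : x ∈ Icc s t
    · rw [indicator_of_mem hx, ← integral_indicator measurableSet_Icc]
      congr! 2 with y
      simp only [indicator, mem_symmRegion, Matrix.cons_val_zero, Matrix.cons_val_one, hx, true_and]
    · simp [indicator, mem_symmRegion, hx]
  calc ∫ y in symmRegion s t h, f y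
      = ∫ z : ℝ × ℝ, (symmRegion s t h).indicator f ![z.1, z.2] := by
        rw [← integral_indicator hR]
        exact (hmp.integral_comp' _).symm
    _ = ∫ x, ∫ y, (symmRegion s t h).indicator f ![x, y] := integral_prod _ hint
    _ = ∫ x in Icc s t, ∫ y in Icc (-h x) (h x), f ![x, y] := by
        simp only [hslice, integral_indicator measurableSet_Icc]

lemma setIntegral_id_symmRegion (hst : s ≤ t) (hh : ∀ x ∈ Icc s t, 0 ≤ h x)
    (hR : IsCompact (symmRegion s t h)) :
    ∫ y in symmRegion s t h, y = ![∫ x in s..t, 2 * x * h x, 0] := by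
  have hid (i : Fin 2) : IntegrableOn (fun y : Fin 2 → ℝ ↦ y i) (symmRegion s t h) :=
    (continuous_apply i).continuousOn.integrableOn_compact hR
  ext i
  rw [eval_integral hid, setIntegral_symmRegion hR.measurableSet (hid i)]
  fin_cases i
  · rw [intervalIntegral.integral_of_le hst, ← integral_Icc_eq_integral_Ioc]
    refine setIntegral_congr_fun measurableSet_Icc fun x hx ↦ ?_
    have := hh x hx
    simp only [Fin.zero_eta, Matrix.cons_val_zero, setIntegral_const, smul_eq_mul,
      Real.volume_real_Icc_of_le (neg_le_self this)]
    ring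
  · refine setIntegral_eq_zero_of_forall_eq_zero fun x hx ↦ ?_
    have := hh x hx
    rw [integral_Icc_eq_integral_Ioc, ← intervalIntegral.integral_of_le (by linarith)]
    simp

lemma ordConnected_setOf_add_smul_mem {E : Type*} [AddCommGroup E] [Module ℝ E] {S : Set E}
    (hS : Convex ℝ S) (p v : E) : OrdConnected {t : ℝ | p + t • v ∈ S} :=
  ((hS.translate_preimage_right p).linear_preimage (LinearMap.toSpanSingleton ℝ E v)).ordConnected

lemma symmRegion_subset_of_eqOn_affine {S : Set (Fin 2 → ℝ)} (hS : Convex ℝ S) {k m : ℝ}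
    (hh : EqOn h (fun x ↦ k + m * x) (Icc s t))
    (hs : ![s, h s] ∈ S) (hs' : ![s, -h s] ∈ S) (ht : ![t, h t] ∈ S) (ht' : ![t, -h t] ∈ S) :
    symmRegion s t h ⊆ S := by
  intro y hy
  obtain ⟨hx, hy⟩ := mem_symmRegion.1 hy
  have hst : s ≤ t := hx.1.trans hx.2
  simp only [hh ⟨le_rfl, hst⟩, hh ⟨hst, le_rfl⟩, hh hx] at hs hs' ht ht' hy
  have hedge {a d : ℝ} (has : ![s, a + d * s] ∈ S) (hat : ![t, a + d * t] ∈ S) :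
      ![y 0, a + d * y 0] ∈ S := by
    have := (ordConnected_setOf_add_smul_mem hS ![0, a] ![1, d]).out (x := s) (y := t)
      (by simpa [mul_comm] using has) (by simpa [mul_comm] using hat) hx
    simpa [mul_comm] using this
  have hbot : ![y 0, -(k + m * y 0)] ∈ S := by
    simpa only [neg_add, neg_mul] using hedge (a := -k) (d := -m)
      (by simpa only [neg_add, neg_mul] using hs') (by simpa only [neg_add, neg_mul] using ht')
  have hvert : ![y 0, 0] + y 1 • ![0, 1] ∈ S :=
    (ordConnected_setOf_add_smul_mem hS ![y 0, 0] ![0, 1]).out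
      (by simpa using hbot) (by simpa using hedge hs ht) hy
  have hy_eq : y = ![y 0, 0] + y 1 • ![0, 1] := by
    ext i
    fin_cases i <;> simp
  rwa [hy_eq]

end SymmRegion

section Pentagon

lemma integral_two_mul_affine_div (s t m d : ℝ) : ∫ x in s..t, 2 * x * ((1 + m * x) / d) =
    (t ^ 2 - s ^ 2 + 2 * m * (t ^ 3 - s ^ 3) / 3) / d := by
  calc ∫ x in s..t, 2 * x * ((1 + m * x) / d)
      = (∫ x in s..t, (2 * x + 2 * m * x ^ 2)) / d := by
        rw [← intervalIntegral.integral_div]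
        congr! 2
        ring
    _ = ((∫ x in s..t, 2 * x) + ∫ x in s..t, 2 * m * x ^ 2) / d := by
        rw [intervalIntegral.integral_add] <;>
          exact Continuous.intervalIntegrable (by fun_prop) _ _
    _ = (t ^ 2 - s ^ 2 + 2 * m * (t ^ 3 - s ^ 3) / 3) / d := by
        rw [intervalIntegral.integral_const_mul, intervalIntegral.integral_const_mul, integral_id,
          integral_pow]
        push_cast
        ring

/-- The constraints tying the coordinates of the pentagon with vertices `(-1/b, 0)`, `(q, ±r)`
and `(b, ±c)`, stated without square roots or divisions: the last two fields are the conjugacy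
relations `⟨(q, r), (-q, r)⟩ = 1 = ⟨(q, r), (-b, c)⟩` behind `P° = -P`. -/
structure IsPentParam (b q r c : ℝ) : Prop where
  b_pos : 0 < b
  r_pos : 0 < r
  c_pos : 0 < c
  q_le : q ≤ b
  r_sq : r ^ 2 = 1 + q ^ 2
  c_mul_r : c * r = 1 + b * q

/-- The five vertices `(-1/b, 0)`, `(q, ±r)` and `(b, ±c)` of the pentagon. -/
def pentVertices (b q r c : ℝ) : Set (Fin 2 → ℝ) :=
  {![-1 / b, 0], ![q, r], ![q, -r], ![b, c], ![b, -c]}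

/-- The upper boundary of the pentagon, a concave function of the first coordinate. -/
def pentProfile (b q r c x : ℝ) : ℝ :=
  min ((1 + b * x) / c) ((1 + q * x) / r)

lemma isPentParam_sqrt {b q : ℝ} (hb : 0 < b) (hq : q ∈ Ioc (-1 / b) b) :
    IsPentParam b q √(1 + q ^ 2) ((1 + b * q) / √(1 + q ^ 2)) := by
  have hbq : 0 < 1 + b * q := by linarith [(div_lt_iff₀' hb).1 hq.1]
  have hr : 0 < √(1 + q ^ 2) := Real.sqrt_pos.2 (by positivity)
  exact ⟨hb, hr, div_pos hbq hr, hq.2, Real.sq_sqrt (by positivity), div_mul_cancel₀ _ hr.ne'⟩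

namespace IsPentParam

variable {b q r c x : ℝ} (h : IsPentParam b q r c)
include h

lemma one_add_mul_pos : 0 < 1 + b * q := h.c_mul_r ▸ mul_pos h.c_pos h.r_pos

lemma neg_inv_le : -1 / b ≤ q := by
  rw [div_le_iff₀' h.b_pos]
  linarith [h.one_add_mul_pos]

lemma mul_sub_mul_eq : r * (r * (1 + b * x) - c * (1 + q * x)) = (b - q) * (x - q) := by
  linear_combination (1 + b * x) * h.r_sq - (1 + q * x) * h.c_mul_r

lemma pentProfile_of_le (hx : x ≤ q) : pentProfile b q r c x = (1 + b * x) / c := by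
  refine min_eq_left ((div_le_div_iff₀ h.c_pos h.r_pos).2 ?_)
  have : r * (r * (1 + b * x) - c * (1 + q * x)) ≤ 0 := h.mul_sub_mul_eq ▸
    mul_nonpos_of_nonneg_of_nonpos (sub_nonneg.2 h.q_le) (sub_nonpos.2 hx)
  linarith [nonpos_of_mul_nonpos_right this h.r_pos]

lemma pentProfile_of_ge (hx : q ≤ x) : pentProfile b q r c x = (1 + q * x) / r := by
  refine min_eq_right ((div_le_div_iff₀ h.r_pos h.c_pos).2 ?_)
  have : 0 ≤ r * (r * (1 + b * x) - c * (1 + q * x)) := h.mul_sub_mul_eq ▸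
    mul_nonneg (sub_nonneg.2 h.q_le) (sub_nonneg.2 hx)
  linarith [nonneg_of_mul_nonneg_right this h.r_pos]

lemma pentProfile_left : pentProfile b q r c (-1 / b) = 0 := by
  have := h.b_pos.ne'
  rw [h.pentProfile_of_le h.neg_inv_le]
  field_simp
  simp

lemma pentProfile_middle : pentProfile b q r c q = r := by
  rw [h.pentProfile_of_ge le_rfl, div_eq_iff h.r_pos.ne']
  linear_combination -h.r_sq

lemma pentProfile_right : pentProfile b q r c b = c := by
  rw [h.pentProfile_of_ge h.q_le, div_eq_iff h.r_pos.ne']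
  linear_combination -h.c_mul_r

lemma mem_polarBody_pentVertices {y : Fin 2 → ℝ} : y ∈ polarBody (pentVertices b q r c) ↔
    -b ≤ y 0 ∧ c * |y 1| ≤ 1 - b * y 0 ∧ r * |y 1| ≤ 1 - q * y 0 := by
  have h₀ : -1 / b * y 0 ≤ 1 ↔ -b ≤ y 0 := by
    rw [div_mul_eq_mul_div, div_le_one h.b_pos]
    constructor <;> intro <;> linarith
  have hpair {a d : ℝ} (hd : 0 < d) :
      a * y 0 + d * y 1 ≤ 1 ∧ a * y 0 - d * y 1 ≤ 1 ↔ d * |y 1| ≤ 1 - a * y 0 := by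
    rw [← abs_of_pos hd, ← abs_mul, abs_le, abs_of_pos hd]
    constructor <;> rintro ⟨_, _⟩ <;> constructor <;> linarith
  simp only [mem_polarBody, pentVertices, mem_insert_iff, mem_singleton_iff, forall_eq_or_imp,
    forall_eq, planeDot_apply, Matrix.cons_val_zero, Matrix.cons_val_one, zero_mul, add_zero,
    neg_mul, ← sub_eq_add_neg]
  rw [h₀, ← hpair h.c_pos, ← hpair h.r_pos]
  tauto

lemma polarBody_pentVertices :
    polarBody (pentVertices b q r c) = -symmRegion (-1 / b) b (pentProfile b q r c) := by
  ext y
  simp only [h.mem_polarBody_pentVertices, symmRegion, pentProfile, Set.mem_neg,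
    mem_ofPred_eq, mem_Icc, Pi.neg_apply, abs_neg, le_min_iff, le_div_iff₀' h.c_pos,
    le_div_iff₀' h.r_pos, mul_neg, ← sub_eq_add_neg, div_le_iff₀' h.b_pos]
  constructor
  · rintro ⟨hy, hc, hr⟩
    have := mul_nonneg h.c_pos.le (abs_nonneg (y 1))
    exact ⟨⟨by linarith, by linarith⟩, hc, hr⟩
  · rintro ⟨⟨_, hy⟩, hc, hr⟩
    exact ⟨by linarith, hc, hr⟩

lemma convex_symmRegion : Convex ℝ (symmRegion (-1 / b) b (pentProfile b q r c)) := by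
  rw [← neg_neg (symmRegion _ _ _), ← h.polarBody_pentVertices]
  exact (convex_polarBody _).neg

lemma pentVertices_subset :
    pentVertices b q r c ⊆ symmRegion (-1 / b) b (pentProfile b q r c) := by
  have hb : -1 / b ≤ b := h.neg_inv_le.trans h.q_le
  simp [pentVertices, insert_subset_iff, symmRegion, h.pentProfile_left, h.pentProfile_middle,
    h.pentProfile_right, h.neg_inv_le, h.q_le, hb, abs_of_pos h.r_pos, abs_of_pos h.c_pos]

lemma symmRegion_subset_convexHull :
    symmRegion (-1 / b) b (pentProfile b q r c) ⊆ convexHull ℝ (pentVertices b q r c) := by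
  have hmem {y : Fin 2 → ℝ} (hy : y ∈ pentVertices b q r c) :
      y ∈ convexHull ℝ (pentVertices b q r c) := subset_convexHull ℝ _ hy
  rintro y ⟨⟨hy₀, hy₁⟩, hy⟩
  rcases le_total (y 0) q with hyq | hqy
  · have haff : EqOn (pentProfile b q r c) (fun x ↦ 1 / c + b / c * x) (Icc (-1 / b) q) :=
      fun x hx ↦ by rw [h.pentProfile_of_le hx.2]; ring
    refine symmRegion_subset_of_eqOn_affine (convex_convexHull ℝ _) haff ?_ ?_ ?_ ?_
        ⟨⟨hy₀, hyq⟩, hy⟩ <;>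
      simp only [h.pentProfile_left, h.pentProfile_middle] <;>
      exact hmem (by simp [pentVertices])
  · have haff : EqOn (pentProfile b q r c) (fun x ↦ 1 / r + q / r * x) (Icc q b) :=
      fun x hx ↦ by rw [h.pentProfile_of_ge hx.1]; ring
    refine symmRegion_subset_of_eqOn_affine (convex_convexHull ℝ _) haff ?_ ?_ ?_ ?_
        ⟨⟨hqy, hy₁⟩, hy⟩ <;>
      simp only [h.pentProfile_middle, h.pentProfile_right] <;>
      exact hmem (by simp [pentVertices])

lemma convexHull_pentVertices : convexHull ℝ (pentVertices b q r c) =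
    symmRegion (-1 / b) b (pentProfile b q r c) :=
  (convexHull_min h.pentVertices_subset h.convex_symmRegion).antisymm
    h.symmRegion_subset_convexHull

lemma pentProfile_nonneg (hx : x ∈ Icc (-1 / b) b) : 0 ≤ pentProfile b q r c x := by
  have hbq := h.one_add_mul_pos
  rcases le_total x q with hxq | hqx
  · rw [h.pentProfile_of_le hxq]
    have := (div_le_iff₀' h.b_pos).1 hx.1
    exact div_nonneg (by linarith) h.c_pos.le
  · rw [h.pentProfile_of_ge hqx]
    refine div_nonneg ?_ h.r_pos.le
    rcases le_total 0 q with hq | hq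
    · linarith [mul_nonneg hq (hq.trans hqx)]
    · linarith [mul_le_mul_of_nonpos_left hx.2 hq]

lemma integral_two_mul_pentProfile : ∫ x in (-1 / b)..b, 2 * x * pentProfile b q r c x =
    (q ^ 3 * b - q ^ 2 * b ^ 2 - q ^ 2 + 2 * q * b ^ 5 + q * b + 3 * b ^ 4 - 1) /
      (3 * b ^ 2 * r) := by
  have hcont : Continuous fun x ↦ 2 * x * pentProfile b q r c x := by
    unfold pentProfile
    fun_prop
  have hleft : ∫ x in (-1 / b)..q, 2 * x * pentProfile b q r c x =
      ∫ x in (-1 / b)..q, 2 * x * ((1 + b * x) / c) :=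
    intervalIntegral.integral_congr fun x hx ↦ by
      rw [uIcc_of_le h.neg_inv_le] at hx
      simp only [h.pentProfile_of_le hx.2]
  have hright : ∫ x in q..b, 2 * x * pentProfile b q r c x =
      ∫ x in q..b, 2 * x * ((1 + q * x) / r) :=
    intervalIntegral.integral_congr fun x hx ↦ by
      rw [uIcc_of_le h.q_le] at hx
      simp only [h.pentProfile_of_ge hx.1]
  rw [← intervalIntegral.integral_add_adjacent_intervals (hcont.intervalIntegrable (-1 / b) q)
    (hcont.intervalIntegrable q b), hleft, hright, integral_two_mul_affine_div,
    integral_two_mul_affine_div, (eq_div_iff h.r_pos.ne').2 h.c_mul_r]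
  have hb := h.b_pos.ne'
  have hr := h.r_pos.ne'
  have hqb : 1 + q * b ≠ 0 := by linarith [h.one_add_mul_pos]
  field_simp
  rw [h.r_sq]
  ring

end IsPentParam

variable {b q : ℝ}

lemma pent_eq_symmRegion (hb : 0 < b) (hq : q ∈ Ioc (-1 / b) b) : pent q b =
    symmRegion (-1 / b) b (pentProfile b q √(1 + q ^ 2) ((1 + b * q) / √(1 + q ^ 2))) :=
  (isPentParam_sqrt hb hq).convexHull_pentVertices

lemma polarBody_pent (hb : 0 < b) (hq : q ∈ Ioc (-1 / b) b) :
    polarBody (pent q b) = -pent q b := by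
  conv_rhs => rw [pent_eq_symmRegion hb hq, ← (isPentParam_sqrt hb hq).polarBody_pentVertices]
  exact polarBody_convexHull _

lemma isCompact_pent (q b : ℝ) : IsCompact (pent q b) :=
  (toFinite _).isCompact_convexHull (𝕜 := ℝ)

lemma pent_mem_nhds_zero (hb : 0 < b) (hq : q ∈ Ioc (-1 / b) b) : pent q b ∈ 𝓝 0 := by
  have h := polarBody_mem_nhds_zero (isCompact_pent q b).isBounded
  rw [polarBody_pent hb hq] at h
  simpa using neg_mem_nhds_zero _ h

lemma bary_pent_eq_zero (hb : 0 < b) (hq : q ∈ Ioc (-1 / b) b)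
    (hf : q ^ 3 * b - q ^ 2 * b ^ 2 - q ^ 2 + 2 * q * b ^ 5 + q * b + 3 * b ^ 4 = 1) :
    bary (pent q b) = 0 := by
  have h := isPentParam_sqrt hb hq
  have hcpt := isCompact_pent q b
  rw [pent_eq_symmRegion hb hq] at hcpt ⊢
  rw [bary, setIntegral_id_symmRegion (h.neg_inv_le.trans h.q_le)
    (fun _ hx ↦ h.pentProfile_nonneg hx) hcpt, h.integral_two_mul_pentProfile, hf]
  simp

end Pentagon

theorem stmt16 (b q : ℝ) (hb : 0 < b) (hq : q ∈ Set.Ioc (-1/b) b)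
    (hf : q ^ 3 * b - q ^ 2 * b ^ 2 - q ^ 2 + 2 * q * b ^ 5 + q * b + 3 * b ^ 4 = 1) :
    bary (pent q b) = 0 ∧ bary (polarBody (pent q b)) = 0 ∧
      fderiv ℝ (FK (pent q b)) (0, 0) = 0 := by
  have hG : bary (pent q b) = 0 := bary_pent_eq_zero hb hq hf
  have hG' : bary (polarBody (pent q b)) = 0 := by
    rw [polarBody_pent hb hq, bary_neg, hG, neg_zero]
  have hcrit := hasFDerivAt_FK_zero (convex_convexHull ℝ _) (isCompact_pent q b)
    (pent_mem_nhds_zero hb hq) hG hG'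
  exact ⟨hG, hG', hcrit.fderiv⟩
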